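/- arXiv:2410.21852 — 8 statements merged into one kernel-verified Lean document; each statement's English description precedes it below -/
import Mathlib

section
/- Let c be a nonzero real number and K_1, K_2 real numbers with K_1² + 1/c ≥ 0, and set A = √(K_1² + 1/c). Then the travelling wave u(X,T) = K_1 + A · tanh(A (X − c T + K_2)) satisfies the equation ∂_T u + ∂_X((1 + ∂_T u)/u) = 0 at every point (X,T) where u(X,T) ≠ 0. -/
/-!
For a travelling wave `u = U(X - cT)` the equation reads `(-c U + (1 - c U') / U)' = 0`, so it is
solved wherever `U ≠ 0` and `-c U + (1 - c U') / U` is constant, that is, wherever `U` solves a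
Riccati equation `1 - c U' = U (c U + k)`. The profile `K + A tanh (A (ξ + s))` solves
`U' = A² - (U - K)²`, and when `A² = K² + 1/c` the terms free of `U` match, giving `k = -2cK`.
-/

open Filter Topology

section TravellingWave

variable {𝕜 : Type*} [NontriviallyNormedField 𝕜]

theorem deriv_comp_sub_const_mul (U : 𝕜 → 𝕜) (c x t : 𝕜) :
    deriv (fun τ => U (x - c * τ)) t = -(c * deriv U (x - c * t)) := by
  rw [deriv_comp_mul_left c (fun y => U (x - y)), deriv_comp_const_sub, smul_eq_mul, mul_neg]

theorem travelling_wave_solves_E1_of_riccati {U : 𝕜 → 𝕜} {c k X T : 𝕜}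
    (hdiff : DifferentiableAt 𝕜 U (X - c * T)) (hne : U (X - c * T) ≠ 0)
    (hriccati : ∀ᶠ ξ in 𝓝 (X - c * T), 1 - c * deriv U ξ = U ξ * (c * U ξ + k)) :
    deriv (fun t => U (X - c * t)) T
      + deriv (fun x => (1 + deriv (fun t => U (x - c * t)) T) / U (x - c * T)) X = 0 := by
  have htendsto : Tendsto (fun x => x - c * T) (𝓝 X) (𝓝 (X - c * T)) :=
    tendsto_id.sub_const (c * T)
  have hflux : (fun x => (1 + deriv (fun t => U (x - c * t)) T) / U (x - c * T))
      =ᶠ[𝓝 X] fun x => c * U (x - c * T) + k := by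
    filter_upwards [htendsto.eventually hriccati,
      htendsto.eventually (hdiff.continuousAt.eventually_ne hne)] with x hx hUx
    rw [deriv_comp_sub_const_mul, ← sub_eq_add_neg, hx, mul_div_cancel_left₀ _ hUx]
  rw [hflux.deriv_eq, deriv_add_const, deriv_const_mul_field, deriv_comp_sub_const,
    deriv_comp_sub_const_mul, neg_add_cancel]

end TravellingWave

theorem hasDerivAt_tanh (x : ℝ) : HasDerivAt Real.tanh (1 - Real.tanh x ^ 2) x := by
  have hcosh : Real.cosh x ≠ 0 := (Real.cosh_pos x).ne'
  have hquot := (Real.hasDerivAt_sinh x).fun_div (Real.hasDerivAt_cosh x) hcosh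
  simp only [← Real.tanh_eq_sinh_div_cosh] at hquot
  refine hquot.congr_deriv ?_
  rw [Real.tanh_eq_sinh_div_cosh]
  field_simp

/-- The kink-shaped profile of the travelling wave: a function of the single variable
`ξ = X - cT`, centred at `-s`, with mean level `K` and with `A` as both amplitude and steepness. -/
noncomputable def tanhProfile (K A s ξ : ℝ) : ℝ :=
  K + A * Real.tanh (A * (ξ + s))

theorem hasDerivAt_tanhProfile (K A s ξ : ℝ) :
    HasDerivAt (tanhProfile K A s) (A ^ 2 - (tanhProfile K A s ξ - K) ^ 2) ξ := by
  have hphase : HasDerivAt (fun y => A * (y + s)) (A * 1) ξ :=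
    ((hasDerivAt_id ξ).add_const s).const_mul A
  refine ((((hasDerivAt_tanh _).comp ξ hphase).const_mul A).const_add K).congr_deriv ?_
  rw [tanhProfile]
  ring

theorem tanhProfile_riccati {c K A : ℝ} (hcA : c * A ^ 2 = c * K ^ 2 + 1) (s ξ : ℝ) :
    1 - c * deriv (tanhProfile K A s) ξ
      = tanhProfile K A s ξ * (c * tanhProfile K A s ξ + -(2 * c * K)) := by
  rw [(hasDerivAt_tanhProfile K A s ξ).deriv]
  linear_combination -hcA

/-- The tanh travelling wave
`u(X,T) = K₁ + A tanh (A (X - cT + K₂))`, with `A = √(K₁² + 1/c) ` and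
`K₁² + 1/c ≥ 0`, satisfies `∂_T u + ∂_X((1 + ∂_T u)/u) = 0` wherever `u ≠ 0`. -/
theorem travelling_wave_tanh_solves_E1
    (c K₁ K₂ : ℝ) (hc : c ≠ 0) (h : K₁ ^ 2 + 1 / c ≥ 0)
    (A : ℝ) (hA : A = Real.sqrt (K₁ ^ 2 + 1 / c))
    (u : ℝ → ℝ → ℝ)
    (hu : ∀ X T, u X T = K₁ + A * Real.tanh (A * (X - c * T + K₂))) :
    ∀ X T, u X T ≠ 0 →
      deriv (fun t => u X t) T
        + deriv (fun x => (1 + deriv (fun t => u x t) T) / u x T) X = 0 := by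
  intro X T hne
  have hcA : c * A ^ 2 = c * K₁ ^ 2 + 1 := by
    rw [hA, Real.sq_sqrt h, mul_add, mul_one_div_cancel hc]
  obtain rfl : u = fun x t => tanhProfile K₁ A K₂ (x - c * t) := funext₂ hu
  exact travelling_wave_solves_E1_of_riccati
    (hasDerivAt_tanhProfile K₁ A K₂ _).differentiableAt hne
    (Eventually.of_forall (tanhProfile_riccati hcA K₂))
end

section
/- Let c be a nonzero real number and K_1, K_2 real numbers with K_1² + 1/c < 0, and set B = √(−(K_1² + 1/c)). Then the singular periodic travelling wave u(X,T) = K_1 − B · tan(B (X − c T + K_2)) satisfies the equation ∂_T u + ∂_X((1 + ∂_T u)/u) = 0 at every point (X,T) where cos(B (X − c T + K_2)) ≠ 0 and u(X,T) ≠ 0. -/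
/-!
On a travelling wave `u(X, T) = U (X - c T)` the equation becomes an ordinary differential equation
for `U`, which integrates once to the Riccati equation `1 - c U' = (c U + a) U` with `a` the
constant of integration. Conversely, this Riccati equation makes the flux `(1 + ∂_T u) / u` equal
to `c u + a`, and `∂_T u + c ∂_X u = 0`. The tangent profile satisfies `U' = -((U - k)² + B²)`,
which is the Riccati equation with `a = -2 c k` when `c (k² + B²) = -1`.
-/

open Filter Topology

section TravellingWave

variable {𝕜 : Type*} [NontriviallyNormedField 𝕜]

/-- The wave with profile `U` moving at speed `c`; the arguments are position, then time. -/
def travellingWave (c : 𝕜) (U : 𝕜 → 𝕜) (X T : 𝕜) : 𝕜 :=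
  U (X - c * T)

/-- Equation (E1), `∂_T u + ∂_X ((1 + ∂_T u) / u) = 0`, at the point `(X, T)`. Since `deriv` and
division are total, this is meaningful only where `u` is smooth and nonzero. -/
def SatisfiesE1At (u : 𝕜 → 𝕜 → 𝕜) (X T : 𝕜) : Prop :=
  deriv (fun t => u X t) T + deriv (fun x => (1 + deriv (fun t => u x t) T) / u x T) X = 0

theorem hasDerivAt_travellingWave_time {c U' X T : 𝕜} {U : 𝕜 → 𝕜}
    (hU : HasDerivAt U U' (X - c * T)) :
    HasDerivAt (fun t => travellingWave c U X t) (-(c * U')) T := by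
  have hphase : HasDerivAt (fun t => X - c * t) (-c) T := by
    simpa using ((hasDerivAt_id T).const_mul c).const_sub X
  exact (hU.comp T hphase).congr_deriv (by ring)

theorem hasDerivAt_travellingWave_space {c U' X T : 𝕜} {U : 𝕜 → 𝕜}
    (hU : HasDerivAt U U' (X - c * T)) :
    HasDerivAt (fun x => travellingWave c U x T) U' X :=
  hU.comp_sub_const X (c * T)

theorem satisfiesE1At_travellingWave_of_riccati {c a X T : 𝕜} {U U' : 𝕜 → 𝕜}
    (hU : ∀ᶠ ξ in 𝓝 (X - c * T), HasDerivAt U (U' ξ) ξ)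
    (hriccati : ∀ᶠ ξ in 𝓝 (X - c * T), 1 - c * U' ξ = (c * U ξ + a) * U ξ)
    (hne : U (X - c * T) ≠ 0) :
    SatisfiesE1At (travellingWave c U) X T := by
  have hU₀ : HasDerivAt U (U' (X - c * T)) (X - c * T) := hU.self_of_nhds
  have hphase : Tendsto (fun x => x - c * T) (𝓝 X) (𝓝 (X - c * T)) :=
    tendsto_id.sub_const _
  have hflux : (fun x => (1 + deriv (fun t => travellingWave c U x t) T) / travellingWave c U x T)
      =ᶠ[𝓝 X] fun x => c * travellingWave c U x T + a := by
    filter_upwards [hphase.eventually hU, hphase.eventually hriccati,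
      hphase.eventually (hU₀.continuousAt.eventually_ne hne)] with x hU_x hriccati_x hne_x
    rw [(hasDerivAt_travellingWave_time hU_x).deriv, ← sub_eq_add_neg, hriccati_x]
    exact mul_div_cancel_right₀ _ hne_x
  have hflux_deriv := ((hasDerivAt_travellingWave_space hU₀).const_mul c).add_const a
  rw [SatisfiesE1At, hflux.deriv_eq, hflux_deriv.deriv,
    (hasDerivAt_travellingWave_time hU₀).deriv, neg_add_cancel]

end TravellingWave

section TanProfile

/-- The singular periodic profile `ξ ↦ k - B tan (B (ξ + s))`, with offset `k`, wavenumber `B` and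
phase shift `s`. At its poles it takes the value `k`, because `Real.tan` vanishes there. -/
noncomputable def tanProfile (k B s ξ : ℝ) : ℝ :=
  k - B * Real.tan (B * (ξ + s))

variable {k B s ξ : ℝ}

theorem hasDerivAt_tanProfile (hcos : Real.cos (B * (ξ + s)) ≠ 0) :
    HasDerivAt (tanProfile k B s) (-((tanProfile k B s ξ - k) ^ 2 + B ^ 2)) ξ := by
  have hphase : HasDerivAt (fun y => B * (y + s)) B ξ := by
    simpa using ((hasDerivAt_id ξ).add_const s).const_mul B
  have hsec : 1 / Real.cos (B * (ξ + s)) ^ 2 = 1 + Real.tan (B * (ξ + s)) ^ 2 := by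
    rw [← Real.inv_one_add_tan_sq hcos, one_div, inv_inv]
  have htan := (((Real.hasDerivAt_tan hcos).comp ξ hphase).const_mul B).const_sub k
  refine htan.congr_deriv ?_
  rw [hsec, tanProfile]
  ring

theorem satisfiesE1At_travellingWave_tanProfile {c X T : ℝ} (hdisp : c * (k ^ 2 + B ^ 2) = -1)
    (hcos : Real.cos (B * (X - c * T + s)) ≠ 0) (hne : tanProfile k B s (X - c * T) ≠ 0) :
    SatisfiesE1At (travellingWave c (tanProfile k B s)) X T := by
  have hcos_near : ∀ᶠ ξ in 𝓝 (X - c * T), Real.cos (B * (ξ + s)) ≠ 0 :=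
    ContinuousAt.eventually_ne (g := fun ξ => Real.cos (B * (ξ + s))) (by fun_prop) hcos
  have hriccati (ξ : ℝ) : 1 - c * -((tanProfile k B s ξ - k) ^ 2 + B ^ 2) =
      (c * tanProfile k B s ξ + -2 * c * k) * tanProfile k B s ξ := by
    linear_combination hdisp
  exact satisfiesE1At_travellingWave_of_riccati (hcos_near.mono fun _ => hasDerivAt_tanProfile)
    (.of_forall hriccati) hne

end TanProfile

/-- The singular periodic travelling wave
`u(X,T) = K₁ - B tan (B (X - cT + K₂))`, with `B = √(-(K₁² + 1/c))` and
`K₁² + 1/c < 0`, satisfies `∂_T u + ∂_X((1 + ∂_T u)/u) = 0` at every point where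
`cos (B (X - cT + K₂)) ≠ 0` and `u ≠ 0`. -/
theorem travelling_wave_tan_solves_E1
    (c K₁ K₂ : ℝ) (hc : c ≠ 0) (h : K₁ ^ 2 + 1 / c < 0)
    (B : ℝ) (hB : B = Real.sqrt (-(K₁ ^ 2 + 1 / c)))
    (u : ℝ → ℝ → ℝ)
    (hu : ∀ X T, u X T = K₁ - B * Real.tan (B * (X - c * T + K₂))) :
    ∀ X T, Real.cos (B * (X - c * T + K₂)) ≠ 0 → u X T ≠ 0 →
      deriv (fun t => u X t) T
        + deriv (fun x => (1 + deriv (fun t => u x t) T) / u x T) X = 0 := by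
  intro X T hcos hne
  have hdisp : c * (K₁ ^ 2 + B ^ 2) = -1 := by
    rw [hB, Real.sq_sqrt (neg_nonneg.mpr h.le)]
    field_simp
    ring
  obtain rfl : u = travellingWave c (tanProfile K₁ B K₂) := funext₂ hu
  exact satisfiesE1At_travellingWave_tanProfile hdisp hcos hne
end

section
/- Let K_1 be a nonzero real number and c, K_2 real numbers. Then the sigmoid travelling wave u(X,T) = (K_1/2) · (1 + tanh((K_1/2)(X − c T + K_2))) is nowhere zero and satisfies the equation ∂_T(u + (∂_X u)/u) = 0 at every point (X,T) ∈ ℝ². -/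
/-!
Since `(1 + tanh (y / 2)) / 2 = sigmoid y`, the wave is `u = K₁ sigmoid (K₁ (X + φ T))` with
`φ T = K₂ - c T`. In `X` it solves the logistic equation `∂_X u = u (K₁ - u)`, so
`u + (∂_X u) / u` is the constant `K₁`, whatever the phase `φ` is.
-/

theorem add_deriv_div_self_eq_of_hasDerivAt_logistic {𝕜 : Type*} [NontriviallyNormedField 𝕜]
    {f : 𝕜 → 𝕜} {K x : 𝕜} (hf : HasDerivAt f (f x * (K - f x)) x) (hx : f x ≠ 0) :
    f x + deriv f x / f x = K := by
  rw [hf.deriv, mul_div_cancel_left₀ _ hx, add_sub_cancel]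

theorem sigmoid_eq_one_add_tanh_half_div_two (y : ℝ) :
    Real.sigmoid y = (1 + Real.tanh (y / 2)) / 2 := by
  have exp_neg_eq : Real.exp (-y) = Real.exp (-(y / 2)) / Real.exp (y / 2) := by
    rw [← Real.exp_sub]
    ring_nf
  rw [Real.tanh_eq, Real.sigmoid_def, exp_neg_eq]
  field_simp
  ring

theorem hasDerivAt_mul_sigmoid_mul_add (K a x : ℝ) :
    HasDerivAt (fun x ↦ K * Real.sigmoid (K * (x + a)))
      (K * Real.sigmoid (K * (x + a)) * (K - K * Real.sigmoid (K * (x + a)))) x := by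
  have phase : HasDerivAt (fun x ↦ K * (x + a)) K x := by
    simpa using ((hasDerivAt_id x).add_const a).const_mul K
  exact (((Real.hasDerivAt_sigmoid _).comp x phase).const_mul K).congr_deriv (by ring)

theorem travelling_wave_sigmoid_solves_E2_general
    (K₁ : ℝ) (hK₁ : K₁ ≠ 0) (φ : ℝ → ℝ) (u : ℝ → ℝ → ℝ)
    (hu : ∀ X T, u X T = K₁ / 2 * (1 + Real.tanh (K₁ / 2 * (X + φ T)))) :
    (∀ X T, u X T ≠ 0) ∧
      (∀ X T, deriv (fun t => u X t + deriv (fun x => u x t) X / u X t) T = 0) := by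
  have u_eq_sigmoid (X T : ℝ) : u X T = K₁ * Real.sigmoid (K₁ * (X + φ T)) := by
    rw [hu, sigmoid_eq_one_add_tanh_half_div_two]
    ring_nf
  have u_ne_zero (X T : ℝ) : u X T ≠ 0 := by
    rw [u_eq_sigmoid]
    exact mul_ne_zero hK₁ (Real.sigmoid_pos _).ne'
  have u_logistic (X T : ℝ) : HasDerivAt (fun x ↦ u x T) (u X T * (K₁ - u X T)) X := by
    simpa only [u_eq_sigmoid] using hasDerivAt_mul_sigmoid_mul_add K₁ (φ T) X
  have conserved (X t : ℝ) : u X t + deriv (fun x ↦ u x t) X / u X t = K₁ :=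
    add_deriv_div_self_eq_of_hasDerivAt_logistic (u_logistic X t) (u_ne_zero X t)
  exact ⟨u_ne_zero, fun X T ↦ by simp only [conserved, deriv_const]⟩

/-- The sigmoid travelling wave
`u(X,T) = (K₁/2)(1 + tanh((K₁/2)(X - cT + K₂)))` with `K₁ ≠ 0` is nowhere zero
and satisfies `∂_T (u + (∂_X u)/u) = 0` at every point of `ℝ²`. -/
theorem travelling_wave_sigmoid_solves_E2
    (K₁ c K₂ : ℝ) (hK₁ : K₁ ≠ 0)
    (u : ℝ → ℝ → ℝ)
    (hu : ∀ X T, u X T = K₁ / 2 * (1 + Real.tanh (K₁ / 2 * (X - c * T + K₂)))) :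
    (∀ X T, u X T ≠ 0) ∧
      (∀ X T, deriv (fun t => u X t + deriv (fun x => u x t) X / u X t) T = 0) :=
  travelling_wave_sigmoid_solves_E2_general K₁ hK₁ (fun T ↦ K₂ - c * T) u fun X T ↦ by
    rw [hu, sub_add_eq_add_sub, add_sub_assoc]
end

section
/- Let φ : ℝ² → ℝ be a smooth function of (X,T) satisfying the linear equation ∂_X ∂_T φ + φ = 0 at every point of ℝ². Then at every point (X,T) where φ(X,T) ≠ 0 and ∂_X φ(X,T) ≠ 0, the Cole–Hopf transform u = (∂_X φ)/φ satisfies ∂_T u + ∂_X((1 + ∂_T u)/u) = 0. -/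
/-!
Write `u = φ_X / φ` and `w = φ_T / φ`. Both are logarithmic derivatives of `φ`, so symmetry of the
mixed partial derivatives gives `u_T = w_X`. Moreover `u_T = φ_XT / φ - u w`, so `φ_XT = -φ` reads
`1 + u_T = -u w`. Hence `(1 + u_T) / u = -w`, and its `X`-derivative cancels `u_T`.
-/

open Filter Topology

section PartialDerivatives

variable {𝕜 F : Type*} [NontriviallyNormedField 𝕜] [NormedAddCommGroup F] [NormedSpace 𝕜 F]

/-- The partial derivative `∂_X φ` of a curried function of `(X, T)`, with value `0` wherever the
slice `φ · T` is not differentiable. -/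
noncomputable def partialX (φ : 𝕜 → 𝕜 → F) (X T : 𝕜) : F :=
  deriv (fun x => φ x T) X

/-- The partial derivative `∂_T φ` of a curried function of `(X, T)`, with value `0` wherever the
slice `φ X ·` is not differentiable. -/
noncomputable def partialT (φ : 𝕜 → 𝕜 → F) (X T : 𝕜) : F :=
  deriv (fun t => φ X t) T

variable {φ : 𝕜 → 𝕜 → F} {X T : 𝕜} {m n : WithTop ℕ∞}

theorem hasDerivAt_fst_of_differentiableAt (hφ : DifferentiableAt 𝕜 ↿φ (X, T)) :
    HasDerivAt (fun x => φ x T) (fderiv 𝕜 ↿φ (X, T) (1, 0)) X :=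
  HasFDerivAt.comp_hasDerivAt (l := ↿φ) X hφ.hasFDerivAt
    ((hasDerivAt_id X).prodMk (hasDerivAt_const X T))

theorem hasDerivAt_snd_of_differentiableAt (hφ : DifferentiableAt 𝕜 ↿φ (X, T)) :
    HasDerivAt (fun t => φ X t) (fderiv 𝕜 ↿φ (X, T) (0, 1)) T :=
  HasFDerivAt.comp_hasDerivAt (l := ↿φ) T hφ.hasFDerivAt
    ((hasDerivAt_const T X).prodMk (hasDerivAt_id T))

theorem hasDerivAt_partialX (hφ : DifferentiableAt 𝕜 ↿φ (X, T)) :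
    HasDerivAt (fun x => φ x T) (partialX φ X T) X :=
  (hasDerivAt_fst_of_differentiableAt hφ).differentiableAt.hasDerivAt

theorem hasDerivAt_partialT (hφ : DifferentiableAt 𝕜 ↿φ (X, T)) :
    HasDerivAt (fun t => φ X t) (partialT φ X T) T :=
  (hasDerivAt_snd_of_differentiableAt hφ).differentiableAt.hasDerivAt

theorem partialX_eq_fderiv (hφ : DifferentiableAt 𝕜 ↿φ (X, T)) :
    partialX φ X T = fderiv 𝕜 ↿φ (X, T) (1, 0) :=
  (hasDerivAt_fst_of_differentiableAt hφ).deriv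

theorem partialT_eq_fderiv (hφ : DifferentiableAt 𝕜 ↿φ (X, T)) :
    partialT φ X T = fderiv 𝕜 ↿φ (X, T) (0, 1) :=
  (hasDerivAt_snd_of_differentiableAt hφ).deriv

theorem eventually_differentiableAt_of_contDiffAt {E : Type*} [NormedAddCommGroup E]
    [NormedSpace 𝕜 E] {f : E → F} {p : E} (hf : ContDiffAt 𝕜 n f p) (hn : 1 ≤ n) :
    ∀ᶠ q in 𝓝 p, DifferentiableAt 𝕜 f q :=
  ((hf.of_le hn).eventually (by simp)).mono fun _ hq => hq.differentiableAt one_ne_zero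

theorem partialX_eventuallyEq_fderiv (hφ : ContDiffAt 𝕜 n ↿φ (X, T)) (hn : 1 ≤ n) :
    ↿(partialX φ) =ᶠ[𝓝 (X, T)] fun p => fderiv 𝕜 ↿φ p (1, 0) :=
  (eventually_differentiableAt_of_contDiffAt hφ hn).mono fun _ => partialX_eq_fderiv

theorem partialT_eventuallyEq_fderiv (hφ : ContDiffAt 𝕜 n ↿φ (X, T)) (hn : 1 ≤ n) :
    ↿(partialT φ) =ᶠ[𝓝 (X, T)] fun p => fderiv 𝕜 ↿φ p (0, 1) :=
  (eventually_differentiableAt_of_contDiffAt hφ hn).mono fun _ => partialT_eq_fderiv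

theorem contDiffAt_partialX (hφ : ContDiffAt 𝕜 n ↿φ (X, T)) (hmn : m + 1 ≤ n) :
    ContDiffAt 𝕜 m ↿(partialX φ) (X, T) :=
  ((hφ.fderiv_right hmn).clm_apply contDiffAt_const).congr_of_eventuallyEq
    (partialX_eventuallyEq_fderiv hφ (le_add_self.trans hmn))

theorem contDiffAt_partialT (hφ : ContDiffAt 𝕜 n ↿φ (X, T)) (hmn : m + 1 ≤ n) :
    ContDiffAt 𝕜 m ↿(partialT φ) (X, T) :=
  ((hφ.fderiv_right hmn).clm_apply contDiffAt_const).congr_of_eventuallyEq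
    (partialT_eventuallyEq_fderiv hφ (le_add_self.trans hmn))

theorem differentiableAt_partialX (hφ : ContDiffAt 𝕜 n ↿φ (X, T)) (hn : 2 ≤ n) :
    DifferentiableAt 𝕜 ↿(partialX φ) (X, T) :=
  (contDiffAt_partialX (m := 1) hφ (one_add_one_eq_two.trans_le hn)).differentiableAt one_ne_zero

theorem differentiableAt_partialT (hφ : ContDiffAt 𝕜 n ↿φ (X, T)) (hn : 2 ≤ n) :
    DifferentiableAt 𝕜 ↿(partialT φ) (X, T) :=
  (contDiffAt_partialT (m := 1) hφ (one_add_one_eq_two.trans_le hn)).differentiableAt one_ne_zero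

theorem partialT_partialX_comm (hφ : ContDiffAt 𝕜 n ↿φ (X, T)) (hn : minSmoothness 𝕜 2 ≤ n) :
    partialT (partialX φ) X T = partialX (partialT φ) X T := by
  have two_le : 2 ≤ n := le_minSmoothness.trans hn
  have one_le : 1 ≤ n := one_le_two.trans two_le
  have fderiv_differentiable : DifferentiableAt 𝕜 (fderiv 𝕜 ↿φ) (X, T) :=
    (hφ.fderiv_right (m := 1) (one_add_one_eq_two.trans_le two_le)).differentiableAt one_ne_zero
  have fderiv_fderiv_apply (v w : 𝕜 × 𝕜) :
      fderiv 𝕜 (fun p => fderiv 𝕜 ↿φ p v) (X, T) w = fderiv 𝕜 (fderiv 𝕜 ↿φ) (X, T) w v := by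
    simp [fderiv_clm_apply fderiv_differentiable (differentiableAt_const v)]
  calc partialT (partialX φ) X T
      = fderiv 𝕜 (fderiv 𝕜 ↿φ) (X, T) (0, 1) (1, 0) := by
        rw [partialT_eq_fderiv (differentiableAt_partialX hφ two_le),
          (partialX_eventuallyEq_fderiv hφ one_le).fderiv_eq, fderiv_fderiv_apply]
    _ = fderiv 𝕜 (fderiv 𝕜 ↿φ) (X, T) (1, 0) (0, 1) := hφ.isSymmSndFDerivAt hn (0, 1) (1, 0)
    _ = partialX (partialT φ) X T := by
        rw [partialX_eq_fderiv (differentiableAt_partialT hφ two_le),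
          (partialT_eventuallyEq_fderiv hφ one_le).fderiv_eq, fderiv_fderiv_apply]

end PartialDerivatives

section ColeHopf

variable {𝕜 𝕜' : Type*} [NontriviallyNormedField 𝕜] [NontriviallyNormedField 𝕜']
  [NormedAlgebra 𝕜 𝕜']

/-- The Cole–Hopf transform `∂_X φ / φ`, with value `0` at the zeros of `φ`. -/
noncomputable def coleHopf (φ : 𝕜 → 𝕜 → 𝕜') (X T : 𝕜) : 𝕜' :=
  partialX φ X T / φ X T

variable {φ : 𝕜 → 𝕜 → 𝕜'} {X T : 𝕜} {n : WithTop ℕ∞}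

theorem partialT_coleHopf (hφ : ContDiffAt 𝕜 n ↿φ (X, T)) (hn : 2 ≤ n) (h0 : φ X T ≠ 0) :
    partialT (coleHopf φ) X T =
      (partialT (partialX φ) X T * φ X T - partialX φ X T * partialT φ X T) / φ X T ^ 2 :=
  ((hasDerivAt_partialT (differentiableAt_partialX hφ hn)).fun_div
    (hasDerivAt_partialT (hφ.differentiableAt (two_pos.trans_le hn).ne')) h0).deriv

theorem hasDerivAt_partialT_div (hφ : ContDiffAt 𝕜 n ↿φ (X, T)) (hn : minSmoothness 𝕜 2 ≤ n)
    (h0 : φ X T ≠ 0) :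
    HasDerivAt (fun x => partialT φ x T / φ x T) (partialT (coleHopf φ) X T) X := by
  have two_le : 2 ≤ n := le_minSmoothness.trans hn
  rw [partialT_coleHopf hφ two_le h0, partialT_partialX_comm hφ hn, mul_comm (partialX φ X T)]
  exact (hasDerivAt_partialX (differentiableAt_partialT hφ two_le)).fun_div
    (hasDerivAt_partialX (hφ.differentiableAt (two_pos.trans_le two_le).ne')) h0

theorem one_add_partialT_coleHopf (hφ : ContDiffAt 𝕜 n ↿φ (X, T)) (hn : minSmoothness 𝕜 2 ≤ n)
    (hlin : partialX (partialT φ) X T + φ X T = 0) (h0 : φ X T ≠ 0) :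
    1 + partialT (coleHopf φ) X T = -(coleHopf φ X T * (partialT φ X T / φ X T)) := by
  rw [partialT_coleHopf hφ (le_minSmoothness.trans hn) h0, partialT_partialX_comm hφ hn,
    eq_neg_of_add_eq_zero_left hlin, coleHopf]
  field_simp
  ring

theorem one_add_partialT_coleHopf_div (hφ : ContDiffAt 𝕜 n ↿φ (X, T))
    (hn : minSmoothness 𝕜 2 ≤ n) (hlin : partialX (partialT φ) X T + φ X T = 0)
    (h0 : φ X T ≠ 0) (hX : partialX φ X T ≠ 0) :
    (1 + partialT (coleHopf φ) X T) / coleHopf φ X T = -(partialT φ X T / φ X T) := by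
  have coleHopf_ne_zero : coleHopf φ X T ≠ 0 := div_ne_zero hX h0
  rw [one_add_partialT_coleHopf hφ hn hlin h0, neg_div, mul_div_cancel_left₀ _ coleHopf_ne_zero]

theorem coleHopf_solves_E1_general (hφ : ContDiffAt 𝕜 (minSmoothness 𝕜 2) ↿φ (X, T))
    (hlin : ∀ᶠ x in 𝓝 X, partialX (partialT φ) x T + φ x T = 0)
    (h0 : φ X T ≠ 0) (hX : partialX φ X T ≠ 0) :
    partialT (coleHopf φ) X T +
      partialX (fun x t => (1 + partialT (coleHopf φ) x t) / coleHopf φ x t) X T = 0 := by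
  have contDiffAt_near : ∀ᶠ x in 𝓝 X, ContDiffAt 𝕜 (minSmoothness 𝕜 2) ↿φ (x, T) :=
    (Continuous.prodMk_left T).continuousAt.eventually (hφ.eventually (by simp))
  have ne_zero_near : ∀ᶠ x in 𝓝 X, φ x T ≠ 0 :=
    have differentiableAt_φ : DifferentiableAt 𝕜 ↿φ (X, T) :=
      hφ.differentiableAt (two_pos.trans_le le_minSmoothness).ne'
    (hasDerivAt_partialX differentiableAt_φ).continuousAt.eventually_ne h0
  have partialX_ne_zero_near : ∀ᶠ x in 𝓝 X, partialX φ x T ≠ 0 :=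
    (hasDerivAt_partialX
      (differentiableAt_partialX hφ le_minSmoothness)).continuousAt.eventually_ne hX
  have flux_eq : (fun x => (1 + partialT (coleHopf φ) x T) / coleHopf φ x T) =ᶠ[𝓝 X]
      fun x => -(partialT φ x T / φ x T) := by
    filter_upwards [contDiffAt_near, hlin, ne_zero_near, partialX_ne_zero_near]
      with x hφx hlinx h0x hXx
    exact one_add_partialT_coleHopf_div hφx le_rfl hlinx h0x hXx
  rw [partialX, flux_eq.deriv_eq, (hasDerivAt_partialT_div hφ le_rfl h0).fun_neg.deriv,
    add_neg_cancel]

end ColeHopf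

/-- If `φ` is smooth and satisfies the linear equation
`∂_X ∂_T φ + φ = 0` everywhere, then its Cole–Hopf transform
`u = (∂_X φ)/φ` satisfies `∂_T u + ∂_X((1 + ∂_T u)/u) = 0` at every point where
`φ ≠ 0` and `∂_X φ ≠ 0`. -/
theorem coleHopf_solves_E1
    (φ : ℝ → ℝ → ℝ)
    (hφ : ContDiff ℝ (⊤ : ℕ∞) (fun p : ℝ × ℝ => φ p.1 p.2))
    (hlin : ∀ X T, deriv (fun x => deriv (fun t => φ x t) T) X + φ X T = 0)
    (u : ℝ → ℝ → ℝ)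
    (hu : ∀ X T, u X T = deriv (fun x => φ x T) X / φ X T) :
    ∀ X T, φ X T ≠ 0 → deriv (fun x => φ x T) X ≠ 0 →
      deriv (fun t => u X t) T
        + deriv (fun x => (1 + deriv (fun t => u x t) T) / u x T) X = 0 := by
  intro X T h0 hX
  obtain rfl : u = coleHopf φ := funext₂ hu
  have hφ2 : ContDiffAt ℝ (minSmoothness ℝ 2) ↿φ (X, T) :=
    hφ.contDiffAt.of_le (by simpa using ENat.LEInfty.out)
  exact coleHopf_solves_E1_general hφ2 (.of_forall fun x => hlin x T) h0 hX
end

section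
/- Let A : ℝ → ℝ be continuously differentiable and B : ℝ → ℝ twice continuously differentiable, and suppose A(T) + B(X) ≠ 0 and B′(X) ≠ 0 for all (X,T) ∈ ℝ². Then the function u(X,T) = ∂_X log(A(T) + B(X)) = B′(X)/(A(T) + B(X)) satisfies ∂_T(u + (∂_X u)/u) = 0 at every point of ℝ². -/
/-!
For fixed `T`, the function `u` is the logarithmic derivative in `X` of `f = A T + B`, and `u_X / u`
is the logarithmic derivative of `u = f' / f`. Since logarithmic derivatives turn quotients into
differences, `u + u_X / u` is the logarithmic derivative of `f' = B'`, which does not involve `T`.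
-/

open scoped Topology

section

variable {𝕜 𝕜' : Type*} [NontriviallyNormedField 𝕜] [NontriviallyNormedField 𝕜']
  [NormedAlgebra 𝕜 𝕜'] {x : 𝕜}

theorem logDeriv_add_logDeriv_logDeriv {f : 𝕜 → 𝕜'} (hf : f x ≠ 0) (hf' : deriv f x ≠ 0)
    (hdf' : DifferentiableAt 𝕜 (deriv f) x) :
    logDeriv f x + logDeriv (logDeriv f) x = logDeriv (deriv f) x := by
  have hdf : DifferentiableAt 𝕜 f x := differentiableAt_of_deriv_ne_zero hf'
  have logDeriv_quotient : logDeriv (logDeriv f) x = logDeriv (deriv f) x - logDeriv f x :=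
    logDeriv_div x hf' hf hdf' hdf
  rw [logDeriv_quotient, add_sub_cancel]

theorem logDeriv_const_add_add_logDeriv_logDeriv {g : 𝕜 → 𝕜'} {c : 𝕜'} (hg : c + g x ≠ 0)
    (hg' : deriv g x ≠ 0) (hdg' : DifferentiableAt 𝕜 (deriv g) x) :
    logDeriv (fun y => c + g y) x + logDeriv (logDeriv fun y => c + g y) x =
      logDeriv (deriv g) x := by
  have deriv_const_add_g : deriv (fun y => c + g y) = deriv g := deriv_const_add' c
  rw [← deriv_const_add_g] at hg' hdg' ⊢
  exact logDeriv_add_logDeriv_logDeriv hg hg' hdg'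

theorem general_solution_degenerate_case_solves_E2_general {A B : 𝕜 → 𝕜'} {X T : 𝕜}
    (hne : ∀ᶠ t in 𝓝 T, A t + B X ≠ 0) (hB' : deriv B X ≠ 0)
    (hdB' : DifferentiableAt 𝕜 (deriv B) X) {u : 𝕜 → 𝕜 → 𝕜'}
    (hu : ∀ x t, u x t = deriv B x / (A t + B x)) :
    HasDerivAt (fun t => u X t + deriv (fun x => u x t) X / u X t) 0 T := by
  have u_eq_logDeriv (t : 𝕜) : (fun x => u x t) = logDeriv fun x => A t + B x := by
    funext x
    rw [hu, logDeriv_apply, deriv_const_add]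
  have eventually_const : (fun t => u X t + deriv (fun x => u x t) X / u X t) =ᶠ[𝓝 T]
      fun _ => logDeriv (deriv B) X := by
    filter_upwards [hne] with t ht
    calc u X t + deriv (fun x => u x t) X / u X t
        = (fun x => u x t) X + logDeriv (fun x => u x t) X := rfl
      _ = logDeriv (deriv B) X := by
        rw [u_eq_logDeriv, logDeriv_const_add_add_logDeriv_logDeriv ht hB' hdB']
  exact (hasDerivAt_const T _).congr_of_eventuallyEq eventually_const

end

/-- For `A` of class `C¹` and `B` of class `C²` with
`A(T) + B(X) ≠ 0` and `B'(X) ≠ 0` everywhere, the function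
`u(X,T) = ∂_X log(A(T) + B(X)) = B'(X)/(A(T) + B(X))` satisfies
`∂_T (u + (∂_X u)/u) = 0` at every point of `ℝ²`. -/
theorem general_solution_degenerate_case_solves_E2
    (A B : ℝ → ℝ) (hA : ContDiff ℝ 1 A) (hB : ContDiff ℝ 2 B)
    (hne : ∀ X T : ℝ, A T + B X ≠ 0) (hB' : ∀ X : ℝ, deriv B X ≠ 0)
    (u : ℝ → ℝ → ℝ)
    (hu : ∀ X T, u X T = deriv B X / (A T + B X)) :
    ∀ X T, deriv (fun t => u X t + deriv (fun x => u x t) X / u X t) T = 0 :=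
  fun X _ => (general_solution_degenerate_case_solves_E2_general (.of_forall (hne X)) (hB' X)
    (hB.differentiable_deriv_two X) hu).deriv
end

section
/- Let η > 0, let N ≥ 1, let k_1, …, k_N be nonzero real numbers and δ_1, …, δ_N real numbers, and set θ_j(X,T) = k_j X − T/k_j + δ_j. Then the multi-kink function u(X,T) = (Σ_{j=1}^N k_j e^{θ_j(X,T)/η}) / (Σ_{j=1}^N e^{θ_j(X,T)/η}) satisfies the viscous conservation law ∂_T u + ∂_X((1 + η ∂_T u)/u) = 0 at every point (X,T) where u(X,T) ≠ 0. -/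
/-! By Cole–Hopf `u = η φ_X / φ` for a solution `φ` of the linear equation `η² φ_XT = -φ`, which
every exponential `e^{(k X - T / k) / η}` solves. For `v = -η φ_T / φ` the linear equation says
`1 + η u_T = u v`, so the flux `(1 + η u_T) / u` is just `v` wherever `u ≠ 0`, and the conservation
law `u_T + v_X = 0` is the equality of the mixed partial derivatives of `log φ`. -/

open scoped Topology

section ColeHopf

variable {𝕜 : Type*} [NontriviallyNormedField 𝕜] {η : 𝕜} {φ p q : 𝕜 → 𝕜 → 𝕜} {X T : 𝕜}

/-- The linear equation `η² φ_XT = -φ` of the Cole–Hopf potential `φ`, written as a first-order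
system for `φ` and its scaled partial derivatives `p = η φ_X` and `q = -η φ_T`. The variables are
ordered as `(X, T)`, and `fst`, `snd` in the field names say which of them varies. -/
structure IsColeHopfSystem (η : 𝕜) (φ p q : 𝕜 → 𝕜 → 𝕜) : Prop where
  hasDerivAt_potential_fst : ∀ X T, HasDerivAt (fun x => φ x T) (p X T / η) X
  hasDerivAt_potential_snd : ∀ X T, HasDerivAt (fun t => φ X t) (-q X T / η) T
  hasDerivAt_p_snd : ∀ X T, HasDerivAt (fun t => p X t) (-φ X T / η) T
  hasDerivAt_q_fst : ∀ X T, HasDerivAt (fun x => q x T) (φ X T / η) X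
  continuous_p_fst : ∀ T, Continuous fun x => p x T

namespace IsColeHopfSystem

theorem hasDerivAt_p_div_potential_snd (h : IsColeHopfSystem η φ p q) (hφ : φ X T ≠ 0) :
    HasDerivAt (fun t => p X t / φ X t) ((p X T / φ X T * (q X T / φ X T) - 1) / η) T := by
  refine ((h.hasDerivAt_p_snd X T).fun_div (h.hasDerivAt_potential_snd X T) hφ).congr_deriv ?_
  field_simp
  ring

theorem hasDerivAt_q_div_potential_fst (h : IsColeHopfSystem η φ p q) (hφ : φ X T ≠ 0) :
    HasDerivAt (fun x => q x T / φ x T) ((1 - p X T / φ X T * (q X T / φ X T)) / η) X := by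
  refine ((h.hasDerivAt_q_fst X T).fun_div (h.hasDerivAt_potential_fst X T) hφ).congr_deriv ?_
  field_simp

theorem flux_eq_q_div_potential (h : IsColeHopfSystem η φ p q) (hη : η ≠ 0)
    (hφ : φ X T ≠ 0) (hp : p X T ≠ 0) :
    (1 + η * deriv (fun t => p X t / φ X t) T) / (p X T / φ X T) = q X T / φ X T := by
  rw [(h.hasDerivAt_p_div_potential_snd hφ).deriv, mul_div_cancel₀ _ hη, add_sub_cancel,
    mul_div_cancel_left₀ _ (div_ne_zero hp hφ)]

theorem flux_eventuallyEq_q_div_potential (h : IsColeHopfSystem η φ p q) (hη : η ≠ 0)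
    (hφ : φ X T ≠ 0) (hp : p X T ≠ 0) :
    (fun x => (1 + η * deriv (fun t => p x t / φ x t) T) / (p x T / φ x T))
      =ᶠ[𝓝 X] fun x => q x T / φ x T := by
  have hφ_near : ∀ᶠ x in 𝓝 X, φ x T ≠ 0 :=
    (h.hasDerivAt_potential_fst X T).continuousAt.eventually_ne hφ
  have hp_near : ∀ᶠ x in 𝓝 X, p x T ≠ 0 := (h.continuous_p_fst T).continuousAt.eventually_ne hp
  filter_upwards [hφ_near, hp_near] with x hφx hpx
  exact h.flux_eq_q_div_potential hη hφx hpx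

theorem viscous_conservation_law (h : IsColeHopfSystem η φ p q) (hη : η ≠ 0)
    (hφ : φ X T ≠ 0) (hp : p X T ≠ 0) :
    deriv (fun t => p X t / φ X t) T
      + deriv (fun x => (1 + η * deriv (fun t => p x t / φ x t) T) / (p x T / φ x T)) X = 0 := by
  rw [(h.flux_eventuallyEq_q_div_potential hη hφ hp).deriv_eq,
    (h.hasDerivAt_p_div_potential_snd hφ).deriv, (h.hasDerivAt_q_div_potential_fst hφ).deriv]
  ring

end IsColeHopfSystem

end ColeHopf

section MultiKink

variable {𝕜 ι : Type*} [RCLike 𝕜] [Fintype ι]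

/-- The superposition `∑ j, c j e^{(k j X - T / k j) / η}`. The phase shifts `δ j` are absorbed into
the weights, as `c j = e^{δ j / η}`. -/
noncomputable def expSum (η : 𝕜) (k c : ι → 𝕜) (X T : 𝕜) : 𝕜 :=
  ∑ j, c j * NormedSpace.exp ((k j * X - T / k j) / η)

/-- The multi-kink `η ∂_X log φ` of the potential `φ = expSum η k c`, with the derivative carried
out. Its value is `0` where `φ` vanishes. -/
noncomputable def multiKink (η : 𝕜) (k c : ι → 𝕜) (X T : 𝕜) : 𝕜 :=
  expSum η k (c * k) X T / expSum η k c X T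

theorem hasDerivAt_expSum_fst (η : 𝕜) (k c : ι → 𝕜) (X T : 𝕜) :
    HasDerivAt (fun x => expSum η k c x T) (expSum η k (c * k) X T / η) X := by
  have phase (j : ι) : HasDerivAt (fun x => (k j * x - T / k j) / η) (k j / η) X := by
    simpa using (((hasDerivAt_id X).const_mul (k j)).sub_const (T / k j)).div_const η
  refine (HasDerivAt.fun_sum fun j _ =>
    (hasDerivAt_exp.comp X (phase j)).const_mul (c j)).congr_deriv ?_
  rw [expSum, Finset.sum_div]
  refine Finset.sum_congr rfl fun j _ => ?_
  rw [Pi.mul_apply]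
  ring

theorem hasDerivAt_expSum_snd (η : 𝕜) (k c : ι → 𝕜) (X T : 𝕜) :
    HasDerivAt (fun t => expSum η k c X t) (-expSum η k (c / k) X T / η) T := by
  have phase (j : ι) : HasDerivAt (fun t => (k j * X - t / k j) / η) (-(1 / k j) / η) T :=
    (((hasDerivAt_id T).div_const (k j)).const_sub (k j * X)).div_const η
  refine (HasDerivAt.fun_sum fun j _ =>
    (hasDerivAt_exp.comp T (phase j)).const_mul (c j)).congr_deriv ?_
  rw [expSum, ← Finset.sum_neg_distrib, Finset.sum_div]
  refine Finset.sum_congr rfl fun j _ => ?_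
  rw [Pi.div_apply]
  ring

theorem isColeHopfSystem_expSum (η : 𝕜) {k : ι → 𝕜} (hk : ∀ j, k j ≠ 0) (c : ι → 𝕜) :
    IsColeHopfSystem η (expSum η k c) (expSum η k (c * k)) (expSum η k (c / k)) where
  hasDerivAt_potential_fst := hasDerivAt_expSum_fst η k c
  hasDerivAt_potential_snd := hasDerivAt_expSum_snd η k c
  hasDerivAt_p_snd X T := by
    have mul_div_k : c * k / k = c := funext fun j => mul_div_cancel_right₀ (c j) (hk j)
    simpa only [mul_div_k] using hasDerivAt_expSum_snd η k (c * k) X T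
  hasDerivAt_q_fst X T := by
    have div_mul_k : c / k * k = c := funext fun j => div_mul_cancel₀ (c j) (hk j)
    simpa only [div_mul_k] using hasDerivAt_expSum_fst η k (c / k) X T
  continuous_p_fst T := continuous_iff_continuousAt.2 fun X =>
    (hasDerivAt_expSum_fst η k (c * k) X T).continuousAt

theorem multikink_solves_viscous_E1_general {η : 𝕜} (hη : η ≠ 0) {k : ι → 𝕜}
    (hk : ∀ j, k j ≠ 0) (c : ι → 𝕜) {X T : 𝕜} (hu : multiKink η k c X T ≠ 0) :
    deriv (fun t => multiKink η k c X t) T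
      + deriv (fun x => (1 + η * deriv (fun t => multiKink η k c x t) T) / multiKink η k c x T) X
        = 0 :=
  have ⟨hp, hφ⟩ := div_ne_zero_iff.1 hu
  (isColeHopfSystem_expSum η hk c).viscous_conservation_law hη hφ hp

theorem multiKink_exp_eq_sum_div_sum (η : ℝ) (k δ : ι → ℝ) (X T : ℝ) :
    multiKink η k (fun j => Real.exp (δ j / η)) X T =
      (∑ j, k j * Real.exp ((k j * X - T / k j + δ j) / η)) /
        ∑ j, Real.exp ((k j * X - T / k j + δ j) / η) := by
  simp only [multiKink, expSum, Pi.mul_apply, ← Real.exp_eq_exp_ℝ, add_div _ (δ _), Real.exp_add]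
  congr 1 <;> exact Finset.sum_congr rfl fun j _ => by ring

end MultiKink

/-- The multi-kink function
`u = (Σ k_j e^{θ_j/η})/(Σ e^{θ_j/η})`, with `θ_j(X,T) = k_j X - T/k_j + δ_j` and
`k_j ≠ 0`, satisfies the viscous conservation law
`∂_T u + ∂_X((1 + η ∂_T u)/u) = 0` wherever `u ≠ 0`. -/
theorem multikink_solves_viscous_E1
    (η : ℝ) (hη : 0 < η) (N : ℕ) (hN : 1 ≤ N)
    (k δ : Fin N → ℝ) (hk : ∀ j, k j ≠ 0)
    (θ : Fin N → ℝ → ℝ → ℝ)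
    (hθ : ∀ j X T, θ j X T = k j * X - T / k j + δ j)
    (u : ℝ → ℝ → ℝ)
    (hu : ∀ X T, u X T =
      (∑ j, k j * Real.exp (θ j X T / η)) / (∑ j, Real.exp (θ j X T / η))) :
    ∀ X T, u X T ≠ 0 →
      deriv (fun t => u X t) T
        + deriv (fun x => (1 + η * deriv (fun t => u x t) T) / u x T) X = 0 := by
  obtain rfl : u = multiKink η k fun j => Real.exp (δ j / η) := by
    funext X T
    simp only [hu, hθ, multiKink_exp_eq_sum_div_sum]
  exact fun X T => multikink_solves_viscous_E1_general hη.ne' hk _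
end

section
/- Let u, ρ : ℝ² → ℝ be smooth functions with u(X,T) ≠ 0 for all (X,T), satisfying the system ∂_X u = u(ρ − u) and ∂_T ρ = −∂_X(1/u) everywhere, and let λ be a real number with λ + u(X,T) ≠ 0 and λ + ρ(X,T) ≠ 0 for all (X,T). Then the transformed pair u^λ := (∂_X u)/(λ + u) + u and ρ^λ := (∂_X ρ)/(λ + ρ) + ρ satisfies the same system, that is ∂_X u^λ = u^λ(ρ^λ − u^λ) and ∂_T ρ^λ = −∂_X(1/u^λ), at every point where u^λ ≠ 0. -/
/-!
Both equations become transparent through logarithmic derivatives. The transformation is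
`f^λ = ∂_X log (λ + f) + f`, and the first equation says `∂_X log u = ρ - u`, which turns `u^λ` into
`u (λ + ρ) / (λ + u)`. Taking `∂_X log` of this product gives `ρ^λ - u^λ`.

For the second equation, `∂_T ρ = -∂_X (1 / u) = ρ / u - 1`, so
`∂_T log (λ + ρ) = (ρ / u - 1) / (λ + ρ) = 1 / u - 1 / u^λ`. Mixed partial derivatives of
`log (λ + ρ)` commute, hence `∂_T ρ^λ = ∂_X (1 / u - 1 / u^λ) + ∂_T ρ = -∂_X (1 / u^λ)`.
-/

open Filter Function Topology

open scoped ContDiff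

section MixedPartials

variable {𝕜 F : Type*} [NontriviallyNormedField 𝕜] [NormedAddCommGroup F] [NormedSpace 𝕜 F]

theorem hasDerivAt_fst_of_differentiableAt_uncurry {f : 𝕜 → 𝕜 → F} {X T : 𝕜}
    (hf : DifferentiableAt 𝕜 (uncurry f) (X, T)) :
    HasDerivAt (fun x => f x T) (fderiv 𝕜 (uncurry f) (X, T) (1, 0)) X := by
  simpa using! (hf.hasFDerivAt.comp X (hasFDerivAt_prodMk_left X T)).hasDerivAt

theorem hasDerivAt_snd_of_differentiableAt_uncurry {f : 𝕜 → 𝕜 → F} {X T : 𝕜}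
    (hf : DifferentiableAt 𝕜 (uncurry f) (X, T)) :
    HasDerivAt (f X) (fderiv 𝕜 (uncurry f) (X, T) (0, 1)) T := by
  simpa using! (hf.hasFDerivAt.comp T (hasFDerivAt_prodMk_right X T)).hasDerivAt

theorem eventually_differentiableAt_of_contDiffAt_one {E : Type*} [NormedAddCommGroup E]
    [NormedSpace 𝕜 E] {f : E → F} {p : E} (hf : ContDiffAt 𝕜 1 f p) :
    ∀ᶠ q in 𝓝 p, DifferentiableAt 𝕜 f q :=
  (hf.eventually (by simp)).mono fun _ hq => hq.differentiableAt one_ne_zero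

theorem hasDerivAt_fderiv_comp_apply {E : Type*} [NormedAddCommGroup E] [NormedSpace 𝕜 E]
    {f : E → F} {γ : 𝕜 → E} {γ' : E} {s : 𝕜} (hf : ContDiffAt 𝕜 2 f (γ s))
    (hγ : HasDerivAt γ γ' s) (v : E) :
    HasDerivAt (fun r => fderiv 𝕜 f (γ r) v) (fderiv 𝕜 (fderiv 𝕜 f) (γ s) γ' v) s := by
  have hf' : DifferentiableAt 𝕜 (fderiv 𝕜 f) (γ s) :=
    (hf.fderiv_right (m := 1) (by norm_num)).differentiableAt one_ne_zero
  simpa using! (hf'.hasFDerivAt.comp_hasDerivAt s hγ).clm_apply (hasDerivAt_const s v)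

theorem hasDerivAt_snd_deriv_fst {f : 𝕜 → 𝕜 → F} {X T : 𝕜}
    (hf : ContDiffAt 𝕜 2 (uncurry f) (X, T)) :
    HasDerivAt (fun t => deriv (fun x => f x t) X)
      (fderiv 𝕜 (fderiv 𝕜 (uncurry f)) (X, T) (0, 1) (1, 0)) T := by
  have deriv_eq : (fun t => deriv (fun x => f x t) X) =ᶠ[𝓝 T]
      fun t => fderiv 𝕜 (uncurry f) (X, t) (1, 0) :=
    ((Continuous.prodMk_right X).tendsto T |>.eventually
      (eventually_differentiableAt_of_contDiffAt_one (hf.of_le one_le_two))).mono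
      fun _ ht => (hasDerivAt_fst_of_differentiableAt_uncurry ht).deriv
  exact (hasDerivAt_fderiv_comp_apply hf ((hasDerivAt_const T X).prodMk (hasDerivAt_id' T))
    (1, 0)).congr_of_eventuallyEq deriv_eq

theorem hasDerivAt_fst_deriv_snd {f : 𝕜 → 𝕜 → F} {X T : 𝕜}
    (hf : ContDiffAt 𝕜 2 (uncurry f) (X, T)) :
    HasDerivAt (fun x => deriv (f x) T)
      (fderiv 𝕜 (fderiv 𝕜 (uncurry f)) (X, T) (1, 0) (0, 1)) X := by
  have deriv_eq : (fun x => deriv (f x) T) =ᶠ[𝓝 X]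
      fun x => fderiv 𝕜 (uncurry f) (x, T) (0, 1) :=
    ((Continuous.prodMk_left T).tendsto X |>.eventually
      (eventually_differentiableAt_of_contDiffAt_one (hf.of_le one_le_two))).mono
      fun _ hx => (hasDerivAt_snd_of_differentiableAt_uncurry hx).deriv
  exact (hasDerivAt_fderiv_comp_apply (γ := fun x => (x, T)) hf ((hasDerivAt_id' X).prodMk
    (hasDerivAt_const X T)) (0, 1)).congr_of_eventuallyEq deriv_eq

theorem hasDerivAt_snd_logDeriv_fst {f : 𝕜 → 𝕜 → 𝕜} {X T : 𝕜} {n : ℕ∞ω}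
    (hf : ContDiffAt 𝕜 n (uncurry f) (X, T)) (hn : minSmoothness 𝕜 2 ≤ n) (hne : f X T ≠ 0) :
    HasDerivAt (fun t => logDeriv (fun x => f x t) X)
      (deriv (fun x => logDeriv (f x) T) X) T := by
  have hf₂ : ContDiffAt 𝕜 2 (uncurry f) (X, T) := hf.of_le (le_minSmoothness.trans hn)
  have hf₁ : DifferentiableAt 𝕜 (uncurry f) (X, T) := hf₂.differentiableAt two_ne_zero
  have deriv_fst := hasDerivAt_fst_of_differentiableAt_uncurry hf₁
  have deriv_snd := hasDerivAt_snd_of_differentiableAt_uncurry hf₁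
  have snd_log_fst := (hasDerivAt_snd_deriv_fst hf₂).fun_div deriv_snd hne
  have fst_log_snd := (hasDerivAt_fst_deriv_snd hf₂).fun_div deriv_fst hne
  simp only [logDeriv_apply]
  refine snd_log_fst.congr_deriv ?_
  rw [fst_log_snd.deriv, deriv_fst.deriv, deriv_snd.deriv, hf.isSymmSndFDerivAt hn (1, 0) (0, 1)]
  ring

end MixedPartials

section Backlund

variable {𝕜 : Type*} [NontriviallyNormedField 𝕜] {u ρ : 𝕜 → 𝕜 → 𝕜} {lam X T : 𝕜}

/-- The pair `(u, ρ)` satisfies the system `∂_X u = u (ρ - u)`, `∂_T ρ = -∂_X (1 / u)` at the point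
`(X, T)`. The partial derivatives on the left-hand sides are required to exist; together with
`u ≠ 0` this makes `1 / u` differentiable in `X`, so that the `deriv` is a genuine derivative. -/
structure IsSystemSolutionAt (u ρ : 𝕜 → 𝕜 → 𝕜) (X T : 𝕜) : Prop where
  ne_zero : u X T ≠ 0
  hasDerivAt_fst : HasDerivAt (fun x => u x T) (u X T * (ρ X T - u X T)) X
  hasDerivAt_snd : HasDerivAt (fun t => ρ X t) (-deriv (fun x => 1 / u x T) X) T

theorem isSystemSolutionAt_of_deriv_eq (hdu : DifferentiableAt 𝕜 (uncurry u) (X, T))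
    (hdρ : DifferentiableAt 𝕜 (uncurry ρ) (X, T)) (hne : u X T ≠ 0)
    (hfst : deriv (fun x => u x T) X = u X T * (ρ X T - u X T))
    (hsnd : deriv (fun t => ρ X t) T = -deriv (fun x => 1 / u x T) X) :
    IsSystemSolutionAt u ρ X T where
  ne_zero := hne
  hasDerivAt_fst :=
    hfst ▸ (hasDerivAt_fst_of_differentiableAt_uncurry hdu).differentiableAt.hasDerivAt
  hasDerivAt_snd :=
    hsnd ▸ (hasDerivAt_snd_of_differentiableAt_uncurry hdρ).differentiableAt.hasDerivAt

/-- The Bäcklund transform `f^λ = (∂_X f) / (λ + f) + f` of one component of the system, for the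
parameter `lam = λ`; the quotient is the junk value `0` where `λ + f = 0`. -/
noncomputable def backlundTransform (lam : 𝕜) (f : 𝕜 → 𝕜 → 𝕜) (X T : 𝕜) : 𝕜 :=
  deriv (fun x => f x T) X / (lam + f X T) + f X T

theorem backlundTransform_eq_logDeriv_add (lam : 𝕜) (f : 𝕜 → 𝕜 → 𝕜) (X T : 𝕜) :
    backlundTransform lam f X T = logDeriv (fun x => lam + f x T) X + f X T := by
  rw [backlundTransform, logDeriv_apply, deriv_const_add]

namespace IsSystemSolutionAt

theorem logDeriv_fst_eq (h : IsSystemSolutionAt u ρ X T) :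
    logDeriv (fun x => u x T) X = ρ X T - u X T := by
  rw [logDeriv_apply, h.hasDerivAt_fst.deriv, mul_div_cancel_left₀ _ h.ne_zero]

theorem differentiableAt_one_div (h : IsSystemSolutionAt u ρ X T) :
    DifferentiableAt 𝕜 (fun x => 1 / u x T) X :=
  (differentiableAt_const 1).fun_div h.hasDerivAt_fst.differentiableAt h.ne_zero

theorem deriv_snd_eq (h : IsSystemSolutionAt u ρ X T) :
    deriv (ρ X) T = ρ X T / u X T - 1 := by
  have hne := h.ne_zero
  have deriv_one_div := (hasDerivAt_const X (1 : 𝕜)).fun_div h.hasDerivAt_fst hne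
  rw [h.hasDerivAt_snd.deriv, deriv_one_div.deriv]
  field_simp
  ring

theorem backlundTransform_fst_eq (h : IsSystemSolutionAt u ρ X T) (hu : lam + u X T ≠ 0) :
    backlundTransform lam u X T = u X T * (lam + ρ X T) / (lam + u X T) := by
  rw [backlundTransform, h.hasDerivAt_fst.deriv]
  field_simp
  ring

theorem backlundTransform_fst_ne_zero (h : IsSystemSolutionAt u ρ X T) (hu : lam + u X T ≠ 0)
    (hρ : lam + ρ X T ≠ 0) : backlundTransform lam u X T ≠ 0 := by
  rw [h.backlundTransform_fst_eq hu]
  exact div_ne_zero (mul_ne_zero h.ne_zero hρ) hu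

theorem logDeriv_snd_const_add_eq (h : IsSystemSolutionAt u ρ X T) (hu : lam + u X T ≠ 0)
    (hρ : lam + ρ X T ≠ 0) :
    logDeriv (fun t => lam + ρ X t) T = 1 / u X T - 1 / backlundTransform lam u X T := by
  have hne := h.ne_zero
  rw [logDeriv_apply, deriv_const_add, h.deriv_snd_eq, h.backlundTransform_fst_eq hu]
  field_simp
  ring

end IsSystemSolutionAt

theorem hasDerivAt_fst_backlundTransform (hsol : ∀ᶠ x in 𝓝 X, IsSystemSolutionAt u ρ x T)
    (hdρ : DifferentiableAt 𝕜 (fun x => ρ x T) X) (hu : lam + u X T ≠ 0) (hρ : lam + ρ X T ≠ 0) :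
    HasDerivAt (fun x => backlundTransform lam u x T)
      (backlundTransform lam u X T *
        (backlundTransform lam ρ X T - backlundTransform lam u X T)) X := by
  have h := hsol.self_of_nhds
  have hdu : DifferentiableAt 𝕜 (fun x => u x T) X := h.hasDerivAt_fst.differentiableAt
  have num_ne : u X T * (lam + ρ X T) ≠ 0 := mul_ne_zero h.ne_zero hρ
  have num_diff := hdu.fun_mul (hdρ.const_add lam)
  have transform_eq : (fun x => backlundTransform lam u x T) =ᶠ[𝓝 X]
      fun x => u x T * (lam + ρ x T) / (lam + u x T) := by
    filter_upwards [hsol, (hdu.const_add lam).continuousAt.eventually_ne hu] with x hx hux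
    exact hx.backlundTransform_fst_eq hux
  have logDeriv_transform : logDeriv (fun x => backlundTransform lam u x T) X =
      backlundTransform lam ρ X T - backlundTransform lam u X T := by
    rw [(logDeriv_congr_nhds transform_eq).self_of_nhds,
      logDeriv_div X num_ne hu num_diff (hdu.const_add lam),
      logDeriv_mul X h.ne_zero hρ hdu (hdρ.const_add lam), h.logDeriv_fst_eq,
      backlundTransform_eq_logDeriv_add, backlundTransform_eq_logDeriv_add]
    ring
  have transform_diff : DifferentiableAt 𝕜 (fun x => backlundTransform lam u x T) X :=
    (num_diff.fun_div (hdu.const_add lam) hu).congr_of_eventuallyEq transform_eq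
  rw [← logDeriv_transform, logDeriv_apply,
    mul_div_cancel₀ _ (h.backlundTransform_fst_ne_zero hu hρ)]
  exact transform_diff.hasDerivAt

theorem hasDerivAt_snd_backlundTransform {n : ℕ∞ω} (hn : minSmoothness 𝕜 2 ≤ n)
    (hsmooth : ContDiffAt 𝕜 n (uncurry ρ) (X, T))
    (hsol : ∀ᶠ x in 𝓝 X, IsSystemSolutionAt u ρ x T)
    (hu : lam + u X T ≠ 0) (hρ : lam + ρ X T ≠ 0)
    (hdinv : DifferentiableAt 𝕜 (fun x => 1 / backlundTransform lam u x T) X) :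
    HasDerivAt (fun t => backlundTransform lam ρ X t)
      (-deriv (fun x => 1 / backlundTransform lam u x T) X) T := by
  have h := hsol.self_of_nhds
  have hu_near : ∀ᶠ x in 𝓝 X, lam + u x T ≠ 0 :=
    (h.hasDerivAt_fst.const_add lam).continuousAt.eventually_ne hu
  have hρ_near : ∀ᶠ x in 𝓝 X, lam + ρ x T ≠ 0 :=
    (hsmooth.continuousAt.comp_of_eq (Continuous.prodMk_left T).continuousAt rfl).const_add lam
      |>.eventually_ne hρ
  have logDeriv_snd : (fun x => logDeriv (fun t => lam + ρ x t) T) =ᶠ[𝓝 X]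
      fun x => 1 / u x T - 1 / backlundTransform lam u x T := by
    filter_upwards [hsol, hu_near, hρ_near] with x hx hux hρx
    exact hx.logDeriv_snd_const_add_eq hux hρx
  have deriv_logDeriv := hasDerivAt_snd_logDeriv_fst (f := fun x t => lam + ρ x t)
    (contDiffAt_const.add hsmooth) hn hρ
  rw [logDeriv_snd.deriv_eq, deriv_fun_sub h.differentiableAt_one_div hdinv] at deriv_logDeriv
  simp only [backlundTransform_eq_logDeriv_add lam ρ]
  exact (deriv_logDeriv.fun_add h.hasDerivAt_snd).congr_deriv (by ring)

theorem backlund_system_general {n : ℕ∞ω} (hn : minSmoothness 𝕜 2 ≤ n)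
    (hsmooth : ContDiffAt 𝕜 n (uncurry ρ) (X, T))
    (hsol : ∀ᶠ x in 𝓝 X, IsSystemSolutionAt u ρ x T)
    (hu : lam + u X T ≠ 0) (hρ : lam + ρ X T ≠ 0) :
    IsSystemSolutionAt (backlundTransform lam u) (backlundTransform lam ρ) X T := by
  have two_le : 2 ≤ n := le_minSmoothness.trans hn
  have hdρ := (hasDerivAt_fst_of_differentiableAt_uncurry
    (hsmooth.differentiableAt (two_pos.trans_le two_le).ne')).differentiableAt
  have transform_ne := hsol.self_of_nhds.backlundTransform_fst_ne_zero hu hρ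
  have deriv_fst := hasDerivAt_fst_backlundTransform hsol hdρ hu hρ
  have hdinv := (differentiableAt_const (1 : 𝕜)).fun_div deriv_fst.differentiableAt transform_ne
  exact ⟨transform_ne, deriv_fst,
    hasDerivAt_snd_backlundTransform hn hsmooth hsol hu hρ hdinv⟩

end Backlund

/-- The componentwise Bäcklund transformation
`u^λ = (∂_X u)/(λ + u) + u`, `ρ^λ = (∂_X ρ)/(λ + ρ) + ρ` maps smooth solutions
of the system `∂_X u = u(ρ - u)`, `∂_T ρ = -∂_X (1/u)` (with `u ≠ 0`,
`λ + u ≠ 0`, `λ + ρ ≠ 0` everywhere) to solutions of the same system, valid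
wherever `u^λ ≠ 0`. -/
theorem backlund_system
    (u ρ : ℝ → ℝ → ℝ)
    (hu_smooth : ContDiff ℝ (⊤ : ℕ∞) (fun p : ℝ × ℝ => u p.1 p.2))
    (hρ_smooth : ContDiff ℝ (⊤ : ℕ∞) (fun p : ℝ × ℝ => ρ p.1 p.2))
    (hne : ∀ X T, u X T ≠ 0)
    (hsys1 : ∀ X T, deriv (fun x => u x T) X = u X T * (ρ X T - u X T))
    (hsys2 : ∀ X T, deriv (fun t => ρ X t) T = -deriv (fun x => 1 / u x T) X)
    (lam : ℝ)
    (hlamu : ∀ X T, lam + u X T ≠ 0) (hlamρ : ∀ X T, lam + ρ X T ≠ 0)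
    (uL ρL : ℝ → ℝ → ℝ)
    (huL : ∀ X T, uL X T = deriv (fun x => u x T) X / (lam + u X T) + u X T)
    (hρL : ∀ X T, ρL X T = deriv (fun x => ρ x T) X / (lam + ρ X T) + ρ X T) :
    ∀ X T, uL X T ≠ 0 →
      deriv (fun x => uL x T) X = uL X T * (ρL X T - uL X T) ∧
      deriv (fun t => ρL X t) T = -deriv (fun x => 1 / uL x T) X := by
  obtain rfl : uL = backlundTransform lam u := funext₂ huL
  obtain rfl : ρL = backlundTransform lam ρ := funext₂ hρL
  intro X T _
  have hsol (x : ℝ) : IsSystemSolutionAt u ρ x T :=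
    isSystemSolutionAt_of_deriv_eq (hu_smooth.differentiable (by simp) _)
      (hρ_smooth.differentiable (by simp) _) (hne x T) (hsys1 x T) (hsys2 x T)
  have transformed := backlund_system_general (n := 2)
    minSmoothness_of_isRCLikeNormedField.le (contDiff_infty.1 hρ_smooth 2).contDiffAt
    (Eventually.of_forall hsol) (hlamu X T) (hlamρ X T)
  exact ⟨transformed.hasDerivAt_fst.deriv, transformed.hasDerivAt_snd.deriv⟩
end

section
/- Let N ≥ 2, let k_1, …, k_N be pairwise distinct nonzero real numbers and δ_1, …, δ_N real, with θ_m(X,T) = k_m X − T/k_m + δ_m, and for η > 0 let u(X,T;η) = (Σ_{m=1}^N k_m e^{θ_m(X,T)/η}) / (Σ_{m=1}^N e^{θ_m(X,T)/η}). Fix distinct indices i, j and a point (X,T) such that max(θ_i(X,T), θ_j(X,T)) > θ_l(X,T) for every l ∉ {i,j}. Then the difference u(X,T;η) − (k_i e^{θ_i(X,T)/η} + k_j e^{θ_j(X,T)/η})/(e^{θ_i(X,T)/η} + e^{θ_j(X,T)/η}) tends to 0 as η → 0⁺; equivalently, on the region R_{ij} = R_i ∪ R_j ∪ L_{ij} the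 multi-kink solution is asymptotically the single kink (k_i + k_j)/2 + ((k_i − k_j)/2) tanh((θ_i − θ_j)/(2η)). -/
/-!
Both sides are centers of mass of the `k m` with Gibbs weights `exp (θ m / η)`: one over all
indices, the other, `v`, over the dominant ones. The dominant terms of `∑ m, w m • (k m - v)` cancel
by definition of `v`, so the difference is controlled by the share of the total weight carried by
the dominated indices, and that share is exponentially small as `η → 0⁺`.
-/

open Filter Topology

section CenterMassAlgebra

variable {ι K E : Type*} [Field K] [AddCommGroup E] [Module K E] {s t : Finset ι} {w : ι → K}

theorem centerMass_eq_sum_mul_div (s : Finset ι) (w z : ι → K) :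
    s.centerMass w z = (∑ i ∈ s, z i * w i) / ∑ i ∈ s, w i := by
  simp only [Finset.centerMass, smul_eq_mul, mul_comm, div_eq_mul_inv]

theorem sum_smul_sub_centerMass (z : ι → E) (hs : ∑ i ∈ s, w i ≠ 0) :
    ∑ i ∈ s, w i • (z i - s.centerMass w z) = 0 := by
  simp only [smul_sub, Finset.sum_sub_distrib, ← Finset.sum_smul]
  rw [Finset.centerMass, smul_inv_smul₀ hs, sub_self]

theorem centerMass_sub_eq_inv_smul_sum (z : ι → E) (hs : ∑ i ∈ s, w i ≠ 0) (v : E) :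
    s.centerMass w z - v = (∑ i ∈ s, w i)⁻¹ • ∑ i ∈ s, w i • (z i - v) := by
  simp only [smul_sub, Finset.sum_sub_distrib, ← Finset.sum_smul]
  rw [inv_smul_smul₀ hs, Finset.centerMass]

theorem centerMass_sub_centerMass_of_subset [DecidableEq ι] (z : ι → E) (hst : s ⊆ t)
    (hs : ∑ i ∈ s, w i ≠ 0) (ht : ∑ i ∈ t, w i ≠ 0) :
    t.centerMass w z - s.centerMass w z =
      (∑ i ∈ t, w i)⁻¹ • ∑ l ∈ t \ s, w l • (z l - s.centerMass w z) := by
  rw [centerMass_sub_eq_inv_smul_sum z ht,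
    ← Finset.sum_sdiff (f := fun l => w l • (z l - s.centerMass w z)) hst,
    sum_smul_sub_centerMass z hs, add_zero]

end CenterMassAlgebra

section CenterMassNorm

variable {ι E : Type*} [SeminormedAddCommGroup E] [NormedSpace ℝ E] {s t : Finset ι} {w : ι → ℝ}

theorem norm_centerMass_le {z : ι → E} {C : ℝ} (hw : ∀ i ∈ s, 0 ≤ w i)
    (hs : 0 < ∑ i ∈ s, w i) (hz : ∀ i ∈ s, ‖z i‖ ≤ C) : ‖s.centerMass w z‖ ≤ C :=
  mem_closedBall_zero_iff.1 <| (convex_closedBall (0 : E) C).centerMass_mem hw hs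
    fun i hi => mem_closedBall_zero_iff.2 (hz i hi)

theorem norm_centerMass_sub_centerMass_le [DecidableEq ι] {z : ι → E} {C : ℝ} (hst : s ⊆ t)
    (hw : ∀ i ∈ t, 0 ≤ w i) (hs : 0 < ∑ i ∈ s, w i) (hz : ∀ i ∈ t, ‖z i‖ ≤ C) :
    ‖t.centerMass w z - s.centerMass w z‖ ≤
      2 * C * ((∑ l ∈ t \ s, w l) / ∑ i ∈ s, w i) := by
  have sum_le : ∑ i ∈ s, w i ≤ ∑ i ∈ t, w i :=
    Finset.sum_le_sum_of_subset_of_nonneg hst fun i hi _ => hw i hi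
  have ht : 0 < ∑ i ∈ t, w i := hs.trans_le sum_le
  have norm_term_le (l) (hl : l ∈ t \ s) :
      ‖w l • (z l - s.centerMass w z)‖ ≤ w l * (2 * C) := by
    have hlt : l ∈ t := Finset.sdiff_subset hl
    have norm_center_le : ‖s.centerMass w z‖ ≤ C :=
      norm_centerMass_le (fun i hi => hw i (hst hi)) hs fun i hi => hz i (hst hi)
    rw [norm_smul, Real.norm_of_nonneg (hw l hlt)]
    gcongr
    · exact hw l hlt
    · linarith [norm_sub_le (z l) (s.centerMass w z), hz l hlt]
  have norm_sum_terms_le := norm_sum_le_of_le (t \ s) norm_term_le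
  calc ‖t.centerMass w z - s.centerMass w z‖
      = (∑ i ∈ t, w i)⁻¹ * ‖∑ l ∈ t \ s, w l • (z l - s.centerMass w z)‖ := by
        rw [centerMass_sub_centerMass_of_subset z hst hs.ne' ht.ne', norm_smul,
          Real.norm_of_nonneg (inv_nonneg.2 ht.le)]
    _ ≤ (∑ i ∈ s, w i)⁻¹ * ∑ l ∈ t \ s, w l * (2 * C) := by gcongr
    _ = 2 * C * ((∑ l ∈ t \ s, w l) / ∑ i ∈ s, w i) := by
        rw [← Finset.sum_mul]; ring

theorem tendsto_centerMass_sub_centerMass_of_subset [DecidableEq ι] {α : Type*} {f : Filter α}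
    {w : α → ι → ℝ} (z : ι → E) (hst : s ⊆ t) (hw : ∀ᶠ a in f, ∀ i ∈ t, 0 ≤ w a i)
    (hs : ∀ᶠ a in f, 0 < ∑ i ∈ s, w a i)
    (hratio : Tendsto (fun a => (∑ l ∈ t \ s, w a l) / ∑ i ∈ s, w a i) f (𝓝 0)) :
    Tendsto (fun a => t.centerMass (w a) z - s.centerMass (w a) z) f (𝓝 0) := by
  have norm_le_sum (i) (hi : i ∈ t) : ‖z i‖ ≤ ∑ l ∈ t, ‖z l‖ :=
    Finset.single_le_sum (fun l _ => norm_nonneg (z l)) hi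
  have bound_tendsto := hratio.const_mul (2 * ∑ l ∈ t, ‖z l‖)
  rw [mul_zero] at bound_tendsto
  refine squeeze_zero_norm' ?_ bound_tendsto
  filter_upwards [hw, hs] with a hwa hsa
  exact norm_centerMass_sub_centerMass_le hst hwa hsa norm_le_sum

end CenterMassNorm

section GibbsWeights

variable {ι : Type*} {s t : Finset ι} {φ : ι → ℝ}

theorem tendsto_exp_div_nhdsGT_zero_of_neg {a : ℝ} (ha : a < 0) :
    Tendsto (fun η : ℝ => Real.exp (a / η)) (𝓝[>] 0) (𝓝 0) := by
  simp only [div_eq_mul_inv]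
  exact Real.tendsto_exp_atBot.comp (tendsto_inv_nhdsGT_zero.const_mul_atTop_of_neg ha)

theorem tendsto_exp_div_div_sum_exp_div {a : ℝ} (ha : ∃ m ∈ s, a < φ m) :
    Tendsto (fun η : ℝ => Real.exp (a / η) / ∑ m ∈ s, Real.exp (φ m / η)) (𝓝[>] 0) (𝓝 0) := by
  obtain ⟨m, hms, ham⟩ := ha
  refine squeeze_zero (fun η => by positivity) (fun η => ?_)
    (tendsto_exp_div_nhdsGT_zero_of_neg (sub_neg.2 ham))
  rw [sub_div, Real.exp_sub]
  gcongr
  exact Finset.single_le_sum (f := fun m => Real.exp (φ m / η)) (fun _ _ => (Real.exp_pos _).le) hms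

theorem tendsto_sum_exp_div_div_sum_exp_div (hdom : ∀ l ∈ t, ∃ m ∈ s, φ l < φ m) :
    Tendsto (fun η : ℝ => (∑ l ∈ t, Real.exp (φ l / η)) / ∑ m ∈ s, Real.exp (φ m / η))
      (𝓝[>] 0) (𝓝 0) := by
  simpa only [Finset.sum_div, Finset.sum_const_zero] using
    tendsto_finsetSum t fun l hl => tendsto_exp_div_div_sum_exp_div (hdom l hl)

theorem multikink_two_term_reduction_general {E : Type*} [SeminormedAddCommGroup E]
    [NormedSpace ℝ E] (z : ι → E) (hst : s ⊆ t) (hs : s.Nonempty)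
    (hdom : ∀ l ∈ t, l ∉ s → ∃ m ∈ s, φ l < φ m) :
    Tendsto (fun η : ℝ => t.centerMass (fun m => Real.exp (φ m / η)) z -
      s.centerMass (fun m => Real.exp (φ m / η)) z) (𝓝[>] 0) (𝓝 0) := by
  classical
  have sdiff_dominated (l) (hl : l ∈ t \ s) : ∃ m ∈ s, φ l < φ m :=
    hdom l (Finset.mem_sdiff.1 hl).1 (Finset.mem_sdiff.1 hl).2
  exact tendsto_centerMass_sub_centerMass_of_subset z hst
    (.of_forall fun _ _ _ => (Real.exp_pos _).le)
    (.of_forall fun _ => Finset.sum_pos (fun _ _ => Real.exp_pos _) hs)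
    (tendsto_sum_exp_div_div_sum_exp_div sdiff_dominated)

end GibbsWeights

/-- On the region `R_{ij}` where `max(θᵢ, θⱼ)` strictly dominates
every other phase, the multi-kink function is asymptotic, as `η → 0⁺`, to the
single two-term kink `(kᵢ e^{θᵢ/η} + kⱼ e^{θⱼ/η})/(e^{θᵢ/η} + e^{θⱼ/η})`, i.e.
their difference tends to `0`. -/
theorem multikink_two_term_reduction
    (N : ℕ) (hN : 2 ≤ N) (k δ : Fin N → ℝ)
    (hk : ∀ m, k m ≠ 0) (hinj : Function.Injective k)
    (θ : Fin N → ℝ → ℝ → ℝ)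
    (hθ : ∀ m X T, θ m X T = k m * X - T / k m + δ m)
    (i j : Fin N) (hij : i ≠ j) (X T : ℝ)
    (hdom : ∀ l, l ≠ i → l ≠ j → max (θ i X T) (θ j X T) > θ l X T) :
    Filter.Tendsto
      (fun η : ℝ =>
        (∑ m, k m * Real.exp (θ m X T / η)) / (∑ m, Real.exp (θ m X T / η))
          - (k i * Real.exp (θ i X T / η) + k j * Real.exp (θ j X T / η))
            / (Real.exp (θ i X T / η) + Real.exp (θ j X T / η)))
      (nhdsWithin 0 (Set.Ioi 0)) (nhds 0) := by
  simpa only [centerMass_eq_sum_mul_div, Finset.sum_pair hij] using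
    multikink_two_term_reduction_general (s := {i, j}) (φ := fun m => θ m X T) k
      (Finset.subset_univ _) (Finset.insert_nonempty _ _) (by simpa using hdom)
end
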